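/- Let β ≠ 0 and δ, a₁, a₂, a₃ be constants, and define A_μ(t) = e^{(δ−a_μ)t/β} for μ = 1,2,3 and the diagonal Bianchi I metric g(t,x,y,z) = diag(−1, A₁(t)², A₂(t)², A₃(t)²). Then the vector field Y with components (Y⁰,Y¹,Y²,Y³)(t,x,y,z) = (1, ((a₁−δ)/β)·x, ((a₂−δ)/β)·y, ((a₃−δ)/β)·z) satisfies L_Y g = 0, i.e., Y is a Killing vector and the space-time becomes homogeneous. -/

import Mathlib

/-- Partial derivative `∂_a f` on ℝ⁴ (coordinates indexed by `Fin 4`). -/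
noncomputable def pderiv4 (a : Fin 4) (f : (Fin 4 → ℝ) → ℝ) (p : Fin 4 → ℝ) : ℝ :=
  fderiv ℝ f p (Pi.single a 1)

/-- Lie derivative of a (0,2)-tensor field `T` along the vector field `X`:
`(L_X T)_{ab} = Σ_c X^c ∂_c T_{ab} + Σ_c T_{cb} ∂_a X^c + Σ_c T_{ac} ∂_b X^c`. -/
noncomputable def lieDerivT (X : (Fin 4 → ℝ) → Fin 4 → ℝ)
    (T : (Fin 4 → ℝ) → Matrix (Fin 4) (Fin 4) ℝ) (p : Fin 4 → ℝ) :
    Matrix (Fin 4) (Fin 4) ℝ :=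
  Matrix.of fun a b =>
    (∑ c, X p c * pderiv4 c (fun q => T q a b) p)
      + (∑ c, T p c b * pderiv4 a (fun q => X q c) p)
      + (∑ c, T p a c * pderiv4 b (fun q => X q c) p)

/-!
Along a vector field whose `a`-th component depends on `x^a` alone, the Lie derivative of a diagonal
tensor is diagonal, so the Killing equations decouple into one scalar equation per coordinate.
For `∂_t + Σ_μ c_μ x^μ ∂_μ` and a Bianchi I metric the equation in the direction `μ` is
`A_μ' = -c_μ A_μ`: the expansion of each axis is undone by a spatial dilation exactly when its rate
is constant in time, that is, when the metric functions are exponentials.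
-/

theorem pderiv4_comp_apply {φ : ℝ → ℝ} {φ' : ℝ} {p : Fin 4 → ℝ} {i : Fin 4}
    (hφ : HasDerivAt φ φ' (p i)) (c : Fin 4) :
    pderiv4 c (fun q => φ (q i)) p = if c = i then φ' else 0 := by
  have h : HasFDerivAt (fun q : Fin 4 → ℝ => φ (q i)) (φ' • ContinuousLinearMap.proj i) p :=
    hφ.comp_hasFDerivAt p (hasFDerivAt_apply (𝕜 := ℝ) i p)
  simp [pderiv4, h.fderiv, Pi.single_apply, eq_comm]

theorem lieDerivT_diagonal (X f : (Fin 4 → ℝ) → Fin 4 → ℝ) (p : Fin 4 → ℝ) :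
    lieDerivT X (fun q => Matrix.diagonal (f q)) p =
      Matrix.diagonal (fun a => ∑ c, X p c * pderiv4 c (fun q => f q a) p) +
        Matrix.of fun a b =>
          f p b * pderiv4 a (fun q => X q b) p + f p a * pderiv4 b (fun q => X q a) p := by
  ext a b
  obtain rfl | hab := eq_or_ne a b
  · simp [lieDerivT, Matrix.diagonal_apply, add_assoc]
  · simp [lieDerivT, Matrix.diagonal_apply, hab, pderiv4]

theorem lieDerivT_diagonal_of_hasDerivAt {f φ : Fin 4 → ℝ → ℝ} {f' φ' p : Fin 4 → ℝ} {i : Fin 4}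
    (hf : ∀ a, HasDerivAt (f a) (f' a) (p i)) (hφ : ∀ a, HasDerivAt (φ a) (φ' a) (p a)) :
    lieDerivT (fun q a => φ a (q a)) (fun q => Matrix.diagonal fun a => f a (q i)) p =
      Matrix.diagonal fun a => φ i (p i) * f' a + 2 * f a (p i) * φ' a := by
  rw [lieDerivT_diagonal]
  ext a b
  obtain rfl | hab := eq_or_ne a b
  · simp only [pderiv4_comp_apply (hf _), pderiv4_comp_apply (hφ _), mul_ite, mul_zero,
      Finset.sum_ite_eq', Finset.mem_univ, ↓reduceIte, Matrix.add_apply, Matrix.diagonal_apply_eq,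
      Matrix.of_apply]
    ring
  · simp [pderiv4_comp_apply (hφ _), hab, hab.symm]

/-- The diagonal Bianchi I metric `-dt² + Σ_μ A_μ(t)² (dx^μ)²`. The spatial index `μ : Fin 3` labels
the coordinate `p μ.succ`. -/
def bianchiIMetric (A : Fin 3 → ℝ → ℝ) (p : Fin 4 → ℝ) : Matrix (Fin 4) (Fin 4) ℝ :=
  Matrix.diagonal ![-1, A 0 (p 0) ^ 2, A 1 (p 0) ^ 2, A 2 (p 0) ^ 2]

/-- The vector field `∂_t + Σ_μ c_μ x^μ ∂_μ`, whose flow translates time while dilating each spatial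
axis at its own constant rate. -/
def translationDilationField (c : Fin 3 → ℝ) (p : Fin 4 → ℝ) : Fin 4 → ℝ :=
  ![1, c 0 * p 1, c 1 * p 2, c 2 * p 3]

theorem lieDerivT_translationDilationField_bianchiIMetric {A : Fin 3 → ℝ → ℝ} {A' : Fin 3 → ℝ}
    {p : Fin 4 → ℝ} (hA : ∀ μ, HasDerivAt (A μ) (A' μ) (p 0)) (c : Fin 3 → ℝ) :
    lieDerivT (translationDilationField c) (bianchiIMetric A) p =
      Matrix.diagonal (Fin.cons 0 fun μ => 2 * A μ (p 0) * (A' μ + c μ * A μ (p 0))) := by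
  let f : Fin 4 → ℝ → ℝ := Fin.cons (fun _ => -1) fun μ t => A μ t ^ 2
  let φ : Fin 4 → ℝ → ℝ := Fin.cons (fun _ => 1) fun μ x => c μ * x
  have hf (a : Fin 4) : HasDerivAt (f a)
      ((Fin.cons 0 fun μ => 2 * A μ (p 0) * A' μ : Fin 4 → ℝ) a) (p 0) := by
    cases a using Fin.cases with
    | zero => exact hasDerivAt_const _ _
    | succ μ => simpa [f] using (hA μ).fun_pow 2
  have hφ (a : Fin 4) : HasDerivAt (φ a) ((Fin.cons 0 c : Fin 4 → ℝ) a) (p a) := by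
    cases a using Fin.cases with
    | zero => exact hasDerivAt_const _ _
    | succ μ => exact hasDerivAt_const_mul (c μ)
  have metric_eq : bianchiIMetric A = fun q => Matrix.diagonal fun a => f a (q 0) := by
    funext q
    refine congrArg Matrix.diagonal (funext fun a => ?_)
    fin_cases a <;> rfl
  have field_eq : translationDilationField c = fun q a => φ a (q a) := by
    funext q a
    fin_cases a <;> rfl
  rw [metric_eq, field_eq, lieDerivT_diagonal_of_hasDerivAt hf hφ]
  refine congrArg Matrix.diagonal (funext fun a => ?_)
  cases a using Fin.cases with
  | zero => simp [φ]
  | succ μ =>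
    simp only [f, φ, Fin.cons_zero, Fin.cons_succ]
    ring

theorem lieDerivT_translationDilationField_bianchiIMetric_eq_zero {A : Fin 3 → ℝ → ℝ}
    {c : Fin 3 → ℝ} {p : Fin 4 → ℝ}
    (hA : ∀ μ, HasDerivAt (A μ) (-c μ * A μ (p 0)) (p 0)) :
    lieDerivT (translationDilationField c) (bianchiIMetric A) p = 0 := by
  rw [lieDerivT_translationDilationField_bianchiIMetric hA, Matrix.diagonal_eq_zero]
  funext a
  cases a using Fin.cases <;> simp

theorem hasDerivAt_exp_mul_div (k β t : ℝ) :
    HasDerivAt (fun s => Real.exp (k * s / β)) (k / β * Real.exp (k * t / β)) t := by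
  simpa [mul_comm] using (((hasDerivAt_id t).const_mul k).div_const β).exp

/-- The Bianchi I metric with exponential metric functions `A_μ(t) = e^{(δ-a_μ)t/β}`
admits the Killing vector
`Y = ∂_t + ((a₁-δ)/β) x ∂_x + ((a₂-δ)/β) y ∂_y + ((a₃-δ)/β) z ∂_z`: `L_Y g = 0`,
so the space-time becomes homogeneous. -/
theorem exponential_bianchiI_extra_killing_vector
    (β δ : ℝ) (hβ : β ≠ 0) (a : Fin 3 → ℝ)
    (A : Fin 3 → ℝ → ℝ)
    (hA : ∀ (μ : Fin 3) (t : ℝ), A μ t = Real.exp ((δ - a μ) * t / β))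
    (g : (Fin 4 → ℝ) → Matrix (Fin 4) (Fin 4) ℝ)
    (hg : ∀ p : Fin 4 → ℝ,
      g p = Matrix.diagonal
        ![(-1 : ℝ), (A 0 (p 0)) ^ 2, (A 1 (p 0)) ^ 2, (A 2 (p 0)) ^ 2])
    (Y : (Fin 4 → ℝ) → Fin 4 → ℝ)
    (hY : ∀ p : Fin 4 → ℝ,
      Y p = ![(1 : ℝ), (a 0 - δ) / β * p 1, (a 1 - δ) / β * p 2, (a 2 - δ) / β * p 3]) :
    ∀ p : Fin 4 → ℝ, lieDerivT Y g p = 0 := by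
  obtain rfl : g = bianchiIMetric A := funext hg
  obtain rfl : Y = translationDilationField fun μ => (a μ - δ) / β := funext hY
  intro p
  refine lieDerivT_translationDilationField_bianchiIMetric_eq_zero fun μ => ?_
  have rate_eq : -((a μ - δ) / β) = (δ - a μ) / β := by ring
  rw [rate_eq, hA μ (p 0), funext (hA μ)]
  exact hasDerivAt_exp_mul_div (δ - a μ) β (p 0)
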